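/- arXiv:2510.08291 — 2 statements merged into one kernel-verified Lean document; each statement's English description precedes it below -/
import Mathlib

section
/- Discrete stochastic Gronwall inequality: Let (Ω, F, {F_n}_{n∈ℕ}, P) be a filtered probability space and let {M_n}_{n∈ℕ} be an {F_n}-martingale with M_0 = 0. Let {X_n}, {F_n}, {G_n} be sequences of nonnegative adapted real random variables with E[X_0] < ∞, and suppose that for all n ∈ ℕ: X_n ≤ F_n + M_n + Σ_{k=0}^{n-1} G_k X_k. Then for any q ∈ (0,1) and any pair of conjugate exponents α, α' ∈ [1,∞] (i.e., 1/α + 1/α' = 1) with qα < 1, and for every n ∈ ℕ, one has E[sup_{0≤k≤n} X_k^q] ≤ (1 + 1/(1-αq))^{1/α} · ‖Π_{k=0}^{n-1} (1+G_k)^q‖_{L^{α'}(Ω)} · (E[sup_{0≤k≤n} F_k])^q. -/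
/-!
Write `P k = ∏_{j<k} (1 + G j)` and `Φ = sup_{k≤n} F k`. Dividing the recursion by `P` absorbs the
sum `∑ G_j X_j` and leaves `0 ≤ Z k ≤ Φ + N k` for `k ≤ n`, where `Z k = X k / P k` and
`N k = ∑_{j<k} (M (j+1) - M j) / P (j+1)`. As `P (j+1)` is `ℱ j`-measurable and at least `1`,
`N` is a (super)martingale starting at zero, so optional stopping at the first time `Z` reaches `t`
gives `t * P(max_{k≤n} Z k ≥ t) ≤ E Φ`. By Kolmogorov's inequality this weak-type bound controls the
moments of order `p < 1` of `max Z`. Finally `X k ^ q ≤ (P n) ^ q * (max Z) ^ q`, and Hölder's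
inequality reduces the claim to the moment of order `α q`.
-/

open MeasureTheory
open scoped NNReal ENNReal

open Filter Topology

section WeakType

lemma lintegral_Ioc_zero_rpow {p c : ℝ} (hp : -1 < p) (hc : 0 ≤ c) :
    ∫⁻ t in Set.Ioc 0 c, ENNReal.ofReal (t ^ p) = ENNReal.ofReal (c ^ (p + 1) / (p + 1)) := by
  have hint : IntegrableOn (fun t : ℝ => t ^ p) (Set.Ioc 0 c) :=
    (intervalIntegrable_iff_integrableOn_Ioc_of_le hc).1
      (intervalIntegral.intervalIntegrable_rpow' hp)
  rw [← ofReal_integral_eq_lintegral_ofReal hint (ae_restrict_of_forall_mem measurableSet_Ioc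
      fun t ht => Real.rpow_nonneg ht.1.le p),
    ← intervalIntegral.integral_of_le hc, integral_rpow (Or.inl hp),
    Real.zero_rpow (by linarith), sub_zero]

lemma lintegral_Ioi_rpow_of_lt {p c : ℝ} (hp : p < -1) (hc : 0 < c) :
    ∫⁻ t in Set.Ioi c, ENNReal.ofReal (t ^ p) = ENNReal.ofReal (-c ^ (p + 1) / (p + 1)) := by
  rw [← ofReal_integral_eq_lintegral_ofReal (integrableOn_Ioi_rpow_of_lt hp hc)
      (ae_restrict_of_forall_mem measurableSet_Ioi
        fun t ht => Real.rpow_nonneg (hc.trans ht).le p),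
    integral_Ioi_rpow_of_lt hp hc]

variable {Ω E : Type*} {m0 : MeasurableSpace Ω} {μ : Measure Ω} [NormedAddCommGroup E]
  {f : Ω → E} {a : ℝ≥0∞}

lemma lintegral_enorm_rpow_le_of_mul_meas_ge_le (hf : AEStronglyMeasurable f μ)
    (hweak : ∀ t : ℝ, 0 < t → ENNReal.ofReal t * μ {ω | t ≤ ‖f ω‖} ≤ a)
    {p : ℝ} (hp0 : 0 < p) (hp1 : p < 1) {c : ℝ} (hc : 0 < c) :
    ∫⁻ ω, ‖f ω‖ₑ ^ p ∂μ
      ≤ ENNReal.ofReal (c ^ p) * μ Set.univ + ENNReal.ofReal (p / (1 - p) * c ^ (p - 1)) * a := by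
  have small : ∫⁻ t in Set.Ioc 0 c, μ {ω | t ≤ ‖f ω‖} * ENNReal.ofReal (t ^ (p - 1))
      ≤ μ Set.univ * ENNReal.ofReal (c ^ p / p) := by
    calc _ ≤ ∫⁻ t in Set.Ioc 0 c, μ Set.univ * ENNReal.ofReal (t ^ (p - 1)) := by
          gcongr; exact Set.subset_univ _
      _ = _ := by
          rw [lintegral_const_mul _ (by fun_prop), lintegral_Ioc_zero_rpow (by linarith) hc.le,
            sub_add_cancel]
  have large : ∫⁻ t in Set.Ioi c, μ {ω | t ≤ ‖f ω‖} * ENNReal.ofReal (t ^ (p - 1))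
      ≤ a * ENNReal.ofReal (c ^ (p - 1) / (1 - p)) := by
    calc _ ≤ ∫⁻ t in Set.Ioi c, a * ENNReal.ofReal (t ^ (p - 2)) := by
          refine setLIntegral_mono' measurableSet_Ioi fun t ht => ?_
          have ht0 : 0 < t := hc.trans ht
          have hsplit : t ^ (p - 1) = t * t ^ (p - 2) := by
            rw [mul_comm, ← Real.rpow_add_one ht0.ne']; ring_nf
          rw [hsplit, ENNReal.ofReal_mul ht0.le, ← mul_assoc, mul_comm (μ _)]
          gcongr
          exact hweak t ht0
      _ = _ := by
          rw [lintegral_const_mul _ (by fun_prop), lintegral_Ioi_rpow_of_lt (by linarith) hc,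
            ← neg_div_neg_eq]
          ring_nf
  calc ∫⁻ ω, ‖f ω‖ₑ ^ p ∂μ
      = ENNReal.ofReal p *
          ∫⁻ t in Set.Ioi 0, μ {ω | t ≤ ‖f ω‖} * ENNReal.ofReal (t ^ (p - 1)) := by
        rw [← lintegral_rpow_eq_lintegral_meas_le_mul μ
          (Eventually.of_forall fun ω => norm_nonneg (f ω)) hf.norm.aemeasurable hp0]
        simp_rw [← ENNReal.ofReal_rpow_of_nonneg (norm_nonneg _) hp0.le, ofReal_norm]
    _ ≤ ENNReal.ofReal p * (μ Set.univ * ENNReal.ofReal (c ^ p / p)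
          + a * ENNReal.ofReal (c ^ (p - 1) / (1 - p))) := by
        rw [← Set.Ioc_union_Ioi_eq_Ioi hc.le]
        gcongr
        exact (lintegral_union_le _ _ _).trans (add_le_add small large)
    _ = _ := by
        rw [mul_add, mul_left_comm, ← ENNReal.ofReal_mul hp0.le, mul_left_comm,
          ← ENNReal.ofReal_mul hp0.le, mul_div_cancel₀ _ hp0.ne', mul_comm (μ _), mul_comm a,
          div_mul_eq_mul_div, mul_div_assoc]

lemma lintegral_enorm_rpow_le_mul_rpow_of_mul_meas_ge_le [IsProbabilityMeasure μ]
    (hf : AEStronglyMeasurable f μ)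
    (hweak : ∀ t : ℝ, 0 < t → ENNReal.ofReal t * μ {ω | t ≤ ‖f ω‖} ≤ a)
    {p : ℝ} (hp0 : 0 < p) (hp1 : p < 1) :
    ∫⁻ ω, ‖f ω‖ₑ ^ p ∂μ ≤ ENNReal.ofReal (1 / (1 - p)) * a ^ p := by
  have h1p : 0 < 1 - p := by linarith
  rcases eq_or_ne a ∞ with rfl | ha
  · simp [ENNReal.top_rpow_of_pos hp0, ENNReal.mul_top, h1p]
  -- The optimal cut-off is `c = a`; letting `c` decrease to `a` also covers `a = 0`.
  have bound : ∀ c ∈ Set.Ioo a ∞,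
      ∫⁻ ω, ‖f ω‖ₑ ^ p ∂μ ≤ ENNReal.ofReal (1 / (1 - p)) * c ^ p := by
    rintro c ⟨hac, hc⟩
    lift c to ℝ≥0 using hc.ne
    have hc0 : (0 : ℝ) < c := by exact_mod_cast pos_of_gt hac
    calc ∫⁻ ω, ‖f ω‖ₑ ^ p ∂μ
        ≤ ENNReal.ofReal (c ^ p) * μ Set.univ
            + ENNReal.ofReal (p / (1 - p) * c ^ (p - 1)) * a :=
          lintegral_enorm_rpow_le_of_mul_meas_ge_le hf hweak hp0 hp1 hc0
      _ ≤ ENNReal.ofReal (c ^ p)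
            + ENNReal.ofReal (p / (1 - p) * c ^ (p - 1)) * ENNReal.ofReal c := by
          rw [measure_univ, mul_one, ENNReal.ofReal_coe_nnreal]
          gcongr
      _ = ENNReal.ofReal (1 / (1 - p) * c ^ p) := by
          rw [← ENNReal.ofReal_mul (by positivity), ← ENNReal.ofReal_add (by positivity)
            (by positivity), mul_assoc, ← Real.rpow_add_one hc0.ne', sub_add_cancel]
          congr 1
          field_simp
          ring
      _ = _ := by
          rw [ENNReal.ofReal_mul (by positivity), ← ENNReal.ofReal_rpow_of_pos hc0,
            ENNReal.ofReal_coe_nnreal]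
  have := nhdsGT_neBot_of_exists_gt ⟨∞, ha.lt_top⟩
  have hlim : Tendsto (fun c => ENNReal.ofReal (1 / (1 - p)) * c ^ p) (𝓝[>] a)
      (𝓝 (ENNReal.ofReal (1 / (1 - p)) * a ^ p)) :=
    (ENNReal.Tendsto.const_mul (ENNReal.continuous_rpow_const.tendsto a)
      (Or.inr ENNReal.ofReal_ne_top)).mono_left nhdsWithin_le_nhds
  exact ge_of_tendsto hlim (eventually_of_mem (Ioo_mem_nhdsGT ha.lt_top) bound)

lemma eLpNorm_le_of_mul_meas_ge_le [IsProbabilityMeasure μ]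
    (hf : AEStronglyMeasurable f μ)
    (hweak : ∀ t : ℝ, 0 < t → ENNReal.ofReal t * μ {ω | t ≤ ‖f ω‖} ≤ a)
    {p : ℝ≥0∞} (hp0 : p ≠ 0) (hp1 : p < 1) :
    eLpNorm f p μ ≤ (1 / (1 - p)) ^ (1 / p.toReal) * a := by
  lift p to ℝ≥0 using hp1.ne_top
  have hp : (0 : ℝ) < p := by simpa [pos_iff_ne_zero] using hp0
  have hp' : (p : ℝ) < 1 := by exact_mod_cast hp1
  have hconst : ENNReal.ofReal (1 / (1 - p)) = 1 / (1 - p) := by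
    rw [ENNReal.ofReal_div_of_pos (by linarith), ENNReal.ofReal_sub _ hp.le,
      ENNReal.ofReal_one, ENNReal.ofReal_coe_nnreal]
  rw [eLpNorm_eq_lintegral_rpow_enorm_toReal hp0 ENNReal.coe_ne_top, ENNReal.coe_toReal]
  calc (∫⁻ ω, ‖f ω‖ₑ ^ (p : ℝ) ∂μ) ^ (1 / (p : ℝ))
      ≤ (1 / (1 - p) * a ^ (p : ℝ)) ^ (1 / (p : ℝ)) := by
        gcongr
        rw [← hconst]
        exact lintegral_enorm_rpow_le_mul_rpow_of_mul_meas_ge_le hf hweak hp hp'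
    _ = _ := by
        rw [ENNReal.mul_rpow_of_nonneg _ _ (by positivity), ← ENNReal.rpow_mul,
          mul_one_div_cancel hp.ne', ENNReal.rpow_one]

end WeakType

section Deterministic

variable {K : Type*} [Field K]

/-- The growth factor `∏_{j<k} (1 + g j)` of the discrete Gronwall recursion with rates `g`, by
which that recursion is discounted. -/
def growthFactor (g : ℕ → K) (k : ℕ) : K := ∏ j ∈ Finset.range k, (1 + g j)

/-- The discounted increments of `m`, summed up to time `k`. The increment from `j` to `j + 1` is
discounted by the growth factor at time `j + 1`, which involves only the rates up to time `j`. -/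
def discountedSum (g m : ℕ → K) (k : ℕ) : K :=
  ∑ j ∈ Finset.range k, (growthFactor g (j + 1))⁻¹ * (m (j + 1) - m j)

lemma growthFactor_succ (g : ℕ → K) (k : ℕ) :
    growthFactor g (k + 1) = growthFactor g k * (1 + g k) :=
  Finset.prod_range_succ _ _

lemma discountedSum_succ (g m : ℕ → K) (k : ℕ) :
    discountedSum g m (k + 1)
      = discountedSum g m k + (growthFactor g (k + 1))⁻¹ * (m (k + 1) - m k) :=
  Finset.sum_range_succ _ _

variable [LinearOrder K] [IsStrictOrderedRing K] {g : ℕ → K}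

lemma growthFactor_mono (hg : ∀ k, 0 ≤ g k) : Monotone (growthFactor g) := fun _ _ hkl =>
  Finset.prod_le_prod_of_subset_of_one_le (Finset.range_mono hkl)
    (fun j _ => by linarith [hg j]) fun j _ _ => by linarith [hg j]

lemma one_le_growthFactor (hg : ∀ k, 0 ≤ g k) (k : ℕ) : 1 ≤ growthFactor g k :=
  Finset.one_le_prod fun j _ => by linarith [hg j]

lemma growthFactor_pos (hg : ∀ k, 0 ≤ g k) (k : ℕ) : 0 < growthFactor g k :=
  zero_lt_one.trans_le (one_le_growthFactor hg k)

lemma div_growthFactor_le_add_discountedSum {x m : ℕ → K} {φ : K} {n : ℕ}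
    (hg : ∀ k, 0 ≤ g k) (hm : m 0 ≤ 0)
    (hx : ∀ k ≤ n, x k ≤ φ + m k + ∑ j ∈ Finset.range k, g j * x j) :
    ∀ k ≤ n, x k / growthFactor g k ≤ φ + discountedSum g m k := by
  have majorant : ∀ k ≤ n, φ + m k + ∑ j ∈ Finset.range k, g j * x j
      ≤ (φ + discountedSum g m k) * growthFactor g k := by
    intro k
    induction k with
    | zero => intro _; simpa [growthFactor, discountedSum] using hm
    | succ k ih =>
      intro hk
      set y := φ + m k + ∑ j ∈ Finset.range k, g j * x j with hy
      have hP : growthFactor g (k + 1) ≠ 0 := (growthFactor_pos hg _).ne'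
      have h1g : 0 ≤ 1 + g k := by linarith [hg k]
      calc φ + m (k + 1) + ∑ j ∈ Finset.range (k + 1), g j * x j
          = y + g k * x k + (m (k + 1) - m k) := by
            rw [Finset.sum_range_succ, hy]; ring
        _ ≤ y + g k * y + (m (k + 1) - m k) := by
            gcongr
            · exact hg k
            · exact hx k (by omega)
        _ = y * (1 + g k) + (m (k + 1) - m k) := by ring
        _ ≤ (φ + discountedSum g m k) * growthFactor g k * (1 + g k) + (m (k + 1) - m k) := by
            gcongr
            exact ih (by omega)
        _ = (φ + discountedSum g m (k + 1)) * growthFactor g (k + 1) := by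
            rw [discountedSum_succ, ← add_assoc, add_mul _ (_ * _), inv_mul_eq_div,
              div_mul_cancel₀ _ hP, growthFactor_succ, mul_assoc]
  intro k hk
  exact (div_le_iff₀ (growthFactor_pos hg k)).2 ((hx k hk).trans (majorant k hk))

end Deterministic

section MaximalInequality

variable {Ω : Type*} {m0 : MeasurableSpace Ω} {μ : Measure Ω} {ℱ : Filtration ℕ m0}

lemma lintegral_ofReal_le_of_integral_nonpos {f g h : Ω → ℝ}
    (hf : ∀ᵐ ω ∂μ, 0 ≤ f ω) (hh : Integrable h μ) (hh0 : ∫ ω, h ω ∂μ ≤ 0)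
    (hle : ∀ᵐ ω ∂μ, f ω ≤ g ω + h ω) :
    ∫⁻ ω, ENNReal.ofReal (f ω) ∂μ ≤ ∫⁻ ω, ENNReal.ofReal (g ω) ∂μ := by
  have hpos : ∫⁻ ω, ENNReal.ofReal (h ω) ∂μ ≠ ∞ := hh.lintegral_lt_top.ne
  have hneg : ∫⁻ ω, ENNReal.ofReal (-h ω) ∂μ ≠ ∞ := hh.neg.lintegral_lt_top.ne
  have hparts : ∫⁻ ω, ENNReal.ofReal (h ω) ∂μ ≤ ∫⁻ ω, ENNReal.ofReal (-h ω) ∂μ := by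
    rw [integral_eq_lintegral_pos_part_sub_lintegral_neg_part hh, sub_nonpos] at hh0
    exact (ENNReal.toReal_le_toReal hpos hneg).1 hh0
  have hpt : ∀ᵐ ω ∂μ, ENNReal.ofReal (f ω) + ENNReal.ofReal (-h ω)
      ≤ ENNReal.ofReal (g ω) + ENNReal.ofReal (h ω) := by
    filter_upwards [hf, hle] with ω hfω hω
    rcases le_total 0 (h ω) with hh | hh
    · rw [ENNReal.ofReal_of_nonpos (neg_nonpos.2 hh), add_zero]
      exact (ENNReal.ofReal_le_ofReal hω).trans ENNReal.ofReal_add_le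
    · rw [ENNReal.ofReal_of_nonpos hh, add_zero, ← ENNReal.ofReal_add hfω (neg_nonneg.2 hh)]
      exact ENNReal.ofReal_le_ofReal (by linarith)
  refine (ENNReal.add_le_add_iff_right hneg).1 ?_
  calc ∫⁻ ω, ENNReal.ofReal (f ω) ∂μ + ∫⁻ ω, ENNReal.ofReal (-h ω) ∂μ
      = ∫⁻ ω, (ENNReal.ofReal (f ω) + ENNReal.ofReal (-h ω)) ∂μ :=
        (lintegral_add_right' _ hh.aemeasurable.neg.ennreal_ofReal).symm
    _ ≤ ∫⁻ ω, (ENNReal.ofReal (g ω) + ENNReal.ofReal (h ω)) ∂μ := lintegral_mono_ae hpt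
    _ = ∫⁻ ω, ENNReal.ofReal (g ω) ∂μ + ∫⁻ ω, ENNReal.ofReal (h ω) ∂μ :=
        lintegral_add_right' _ hh.aemeasurable.ennreal_ofReal
    _ ≤ ∫⁻ ω, ENNReal.ofReal (g ω) ∂μ + ∫⁻ ω, ENNReal.ofReal (-h ω) ∂μ := by gcongr

lemma supermartingale_integral_stoppedValue_le [SigmaFiniteFiltration μ ℱ] {N : ℕ → Ω → ℝ}
    (hN : Supermartingale N ℱ μ) {τ : Ω → ℕ∞} (hτ : IsStoppingTime ℱ τ) {n : ℕ}
    (hτn : ∀ ω, τ ω ≤ n) : ∫ ω, stoppedValue N τ ω ∂μ ≤ ∫ ω, N 0 ω ∂μ := by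
  have h := hN.neg.expected_stoppedValue_mono (isStoppingTime_const ℱ 0) hτ
    (fun _ => zero_le) hτn
  change ∫ ω, -N 0 ω ∂μ ≤ ∫ ω, -stoppedValue N τ ω ∂μ at h
  rwa [integral_neg, integral_neg, neg_le_neg_iff] at h

lemma mul_meas_iSup_ge_le_lintegral_of_le_add_supermartingale [SigmaFiniteFiltration μ ℱ]
    {Z N : ℕ → Ω → ℝ} {Φ : Ω → ℝ} {n : ℕ}
    (hN : Supermartingale N ℱ μ) (hN0 : ∫ ω, N 0 ω ∂μ ≤ 0)
    (hZ : Adapted ℱ Z) (hZnn : ∀ k ω, 0 ≤ Z k ω)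
    (hle : ∀ᵐ ω ∂μ, ∀ k ≤ n, Z k ω ≤ Φ ω + N k ω) {t : ℝ} :
    ENNReal.ofReal t * μ {ω | t ≤ ⨆ k : Fin (n + 1), Z k ω}
      ≤ ∫⁻ ω, ENNReal.ofReal (Φ ω) ∂μ := by
  let τ : Ω → ℕ∞ := fun ω => (hittingBtwn Z (Set.Ici t) 0 n ω : ℕ)
  have hτ : IsStoppingTime ℱ τ := hZ.isStoppingTime_hittingBtwn measurableSet_Ici
  have hτn : ∀ ω, τ ω ≤ n := fun ω => Nat.cast_le.2 (hittingBtwn_le ω)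
  have hZτ : ∀ ω, t ≤ ⨆ k : Fin (n + 1), Z k ω → t ≤ stoppedValue Z τ ω := by
    intro ω ht
    obtain ⟨k, hk⟩ := exists_eq_ciSup_of_finite (f := fun k : Fin (n + 1) => Z k ω)
    exact stoppedValue_hittingBtwn_mem (s := Set.Ici t)
      ⟨k, ⟨Nat.zero_le _, Nat.le_of_lt_succ k.2⟩, ht.trans_eq hk.symm⟩
  have hZτm : Measurable (stoppedValue Z τ) :=
    ((measurable_stoppedValue hZ.stronglyAdapted.isStronglyProgressive_of_discrete hτ)).mono
      hτ.measurableSpace_le le_rfl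
  have hNτ : ∫ ω, stoppedValue N τ ω ∂μ ≤ 0 :=
    (supermartingale_integral_stoppedValue_le hN hτ hτn).trans hN0
  calc ENNReal.ofReal t * μ {ω | t ≤ ⨆ k : Fin (n + 1), Z k ω}
      ≤ ENNReal.ofReal t * μ {ω | ENNReal.ofReal t ≤ ENNReal.ofReal (stoppedValue Z τ ω)} := by
        gcongr
        exact fun hω => ENNReal.ofReal_le_ofReal (hZτ _ hω)
    _ ≤ ∫⁻ ω, ENNReal.ofReal (stoppedValue Z τ ω) ∂μ :=
        mul_meas_ge_le_lintegral hZτm.ennreal_ofReal _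
    _ ≤ ∫⁻ ω, ENNReal.ofReal (Φ ω) ∂μ := by
        refine lintegral_ofReal_le_of_integral_nonpos (Eventually.of_forall fun ω => hZnn _ ω)
          (integrable_stoppedValue ℕ hτ hN.integrable hτn) hNτ ?_
        filter_upwards [hle] with ω hω
        exact hω _ (hittingBtwn_le ω)

end MaximalInequality

section Gronwall

variable {Ω : Type*} {m0 : MeasurableSpace Ω} {μ : Measure Ω} {ℱ : Filtration ℕ m0}
  {X G M : ℕ → Ω → ℝ}

lemma measurable_growthFactor (hG : Adapted ℱ G) {k l : ℕ} (hkl : k ≤ l + 1) :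
    Measurable[ℱ l] fun ω => growthFactor (G · ω) k :=
  Finset.measurable_fun_prod _ fun j hj => measurable_const.add <|
    (hG j).mono (ℱ.mono (Nat.le_of_lt_succ ((Finset.mem_range.1 hj).trans_le hkl))) le_rfl

lemma measurable_iSup_div_growthFactor (hX : Adapted ℱ X) (hG : Adapted ℱ G) (n : ℕ) :
    Measurable fun ω => ⨆ k : Fin (n + 1), X k ω / growthFactor (G · ω) k :=
  Measurable.iSup fun k =>
    ((hX k).div (measurable_growthFactor hG (k : ℕ).le_succ)).mono (ℱ.le k) le_rfl

lemma supermartingale_discountedSum [IsFiniteMeasure μ] (hM : Supermartingale M ℱ μ)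
    (hG : Adapted ℱ G) (hGnn : ∀ k ω, 0 ≤ G k ω) :
    Supermartingale (fun k ω => discountedSum (G · ω) (M · ω) k) ℱ μ := by
  let ξ : ℕ → Ω → ℝ := fun k ω => (growthFactor (G · ω) (k + 1))⁻¹
  have hξ : StronglyAdapted ℱ ξ := fun k =>
    (measurable_growthFactor hG le_rfl).inv.stronglyMeasurable
  have hξ1 : ∀ k ω, ξ k ω ≤ 1 := fun k ω =>
    inv_le_one_of_one_le₀ (one_le_growthFactor (hGnn · ω) _)
  have hξ0 : ∀ k ω, 0 ≤ ξ k ω := fun k ω => inv_nonneg.2 (growthFactor_pos (hGnn · ω) _).le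
  have heq : (fun k ω => discountedSum (G · ω) (M · ω) k)
      = -fun k => ∑ j ∈ Finset.range k, ξ j * ((-M) (j + 1) - (-M) j) := by
    funext k ω
    simp only [discountedSum, Pi.neg_apply, Finset.sum_apply, Pi.mul_apply, Pi.sub_apply,
      ← Finset.sum_neg_distrib, ξ]
    exact Finset.sum_congr rfl fun j _ => by ring
  rw [heq]
  exact (hM.neg.sum_mul_sub hξ hξ1 hξ0).neg

lemma mul_meas_iSup_div_growthFactor_ge_le [IsFiniteMeasure μ] {Φ : Ω → ℝ} {n : ℕ}
    (hM : Supermartingale M ℱ μ) (hM0 : ∀ᵐ ω ∂μ, M 0 ω ≤ 0)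
    (hX : Adapted ℱ X) (hG : Adapted ℱ G) (hXnn : ∀ k ω, 0 ≤ X k ω) (hGnn : ∀ k ω, 0 ≤ G k ω)
    (hrec : ∀ k ≤ n, ∀ᵐ ω ∂μ, X k ω ≤ Φ ω + M k ω + ∑ j ∈ Finset.range k, G j ω * X j ω)
    (t : ℝ) :
    ENNReal.ofReal t * μ {ω | t ≤ ⨆ k : Fin (n + 1), X k ω / growthFactor (G · ω) k}
      ≤ ∫⁻ ω, ENNReal.ofReal (Φ ω) ∂μ := by
  refine mul_meas_iSup_ge_le_lintegral_of_le_add_supermartingale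
    (Z := fun k ω => X k ω / growthFactor (G · ω) k) (supermartingale_discountedSum hM hG hGnn)
    (by simp [discountedSum]) (fun k => (hX k).div (measurable_growthFactor hG k.le_succ))
    (fun k ω => div_nonneg (hXnn k ω) (growthFactor_pos (hGnn · ω) k).le) ?_
  have hrec' : ∀ᵐ ω ∂μ, ∀ k ≤ n,
      X k ω ≤ Φ ω + M k ω + ∑ j ∈ Finset.range k, G j ω * X j ω := by
    simpa only [ae_all_iff] using hrec
  filter_upwards [hM0, hrec'] with ω hM0ω hω
  exact div_growthFactor_le_add_discountedSum (hGnn · ω) hM0ω hω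

lemma iSup_rpow_le_growthFactor_rpow_mul {x g : ℕ → ℝ} (hx : ∀ k, 0 ≤ x k) (hg : ∀ k, 0 ≤ g k)
    {q : ℝ} (hq : 0 ≤ q) (n : ℕ) :
    ⨆ k : Fin (n + 1), x k ^ q
      ≤ growthFactor g n ^ q * (⨆ k : Fin (n + 1), x k / growthFactor g k) ^ q := by
  set s := ⨆ k : Fin (n + 1), x k / growthFactor g k
  have hxs : ∀ k : Fin (n + 1), x k / growthFactor g k ≤ s :=
    le_ciSup (f := fun k : Fin (n + 1) => x k / growthFactor g k) (Set.finite_range _).bddAbove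
  have hs0 : 0 ≤ s := (div_nonneg (hx _) (growthFactor_pos hg _).le).trans (hxs 0)
  refine ciSup_le fun k => ?_
  rw [← Real.mul_rpow (growthFactor_pos hg n).le hs0]
  refine Real.rpow_le_rpow (hx k) ?_ hq
  calc x k ≤ s * growthFactor g k := (div_le_iff₀ (growthFactor_pos hg k)).1 (hxs k)
    _ ≤ s * growthFactor g n := by
        gcongr
        exact growthFactor_mono hg (Nat.le_of_lt_succ k.2)
    _ = growthFactor g n * s := mul_comm _ _

lemma eLpNorm_iSup_div_growthFactor_rpow_le [IsProbabilityMeasure μ] {Φ : Ω → ℝ} {n : ℕ}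
    (hM : Supermartingale M ℱ μ) (hM0 : ∀ᵐ ω ∂μ, M 0 ω ≤ 0)
    (hX : Adapted ℱ X) (hG : Adapted ℱ G) (hXnn : ∀ k ω, 0 ≤ X k ω) (hGnn : ∀ k ω, 0 ≤ G k ω)
    (hrec : ∀ k ≤ n, ∀ᵐ ω ∂μ, X k ω ≤ Φ ω + M k ω + ∑ j ∈ Finset.range k, G j ω * X j ω)
    {q : ℝ} (hq : 0 < q) {α : ℝ≥0∞} (hα : α ≠ 0) (hqα : ENNReal.ofReal q * α < 1) :
    eLpNorm (fun ω => (⨆ k : Fin (n + 1), X k ω / growthFactor (G · ω) k) ^ q) α μ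
      ≤ (1 / (1 - ENNReal.ofReal q * α)) ^ (1 / α).toReal
        * (∫⁻ ω, ENNReal.ofReal (Φ ω) ∂μ) ^ q := by
  set S : Ω → ℝ := fun ω => ⨆ k : Fin (n + 1), X k ω / growthFactor (G · ω) k
  have hS0 : ∀ ω, 0 ≤ S ω := fun ω =>
    Real.iSup_nonneg fun k => div_nonneg (hXnn k ω) (growthFactor_pos (hGnn · ω) k).le
  have hS : AEStronglyMeasurable S μ :=
    (measurable_iSup_div_growthFactor hX hG n).aestronglyMeasurable
  have hweak : ∀ t : ℝ, 0 < t →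
      ENNReal.ofReal t * μ {ω | t ≤ ‖S ω‖} ≤ ∫⁻ ω, ENNReal.ofReal (Φ ω) ∂μ := fun t _ => by
    simpa only [Real.norm_of_nonneg (hS0 _)] using
      mul_meas_iSup_div_growthFactor_ge_le hM hM0 hX hG hXnn hGnn hrec t
  have hp0 : ENNReal.ofReal q * α ≠ 0 := mul_ne_zero (by simpa using hq) hα
  have hexp : 1 / (ENNReal.ofReal q * α).toReal * q = (1 / α).toReal := by
    rw [ENNReal.toReal_mul, ENNReal.toReal_ofReal hq.le, one_div α, ENNReal.toReal_inv]
    field_simp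
  calc eLpNorm (fun ω => S ω ^ q) α μ
      = eLpNorm (fun ω => ‖S ω‖ ^ q) α μ := by simp only [Real.norm_of_nonneg (hS0 _)]
    _ = eLpNorm S (ENNReal.ofReal q * α) μ ^ q := by rw [eLpNorm_norm_rpow S hq, mul_comm]
    _ ≤ ((1 / (1 - ENNReal.ofReal q * α)) ^ (1 / (ENNReal.ofReal q * α).toReal)
          * ∫⁻ ω, ENNReal.ofReal (Φ ω) ∂μ) ^ q := by
        gcongr
        exact eLpNorm_le_of_mul_meas_ge_le hS hweak hp0 hqα
    _ = _ := by rw [ENNReal.mul_rpow_of_nonneg _ _ hq.le, ← ENNReal.rpow_mul, hexp]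

theorem discrete_stochastic_gronwall_general [IsProbabilityMeasure μ] {F : ℕ → Ω → ℝ} {n : ℕ}
    (hM : Supermartingale M ℱ μ) (hM0 : ∀ᵐ ω ∂μ, M 0 ω ≤ 0)
    (hX : Adapted ℱ X) (hG : Adapted ℱ G) (hXnn : ∀ k ω, 0 ≤ X k ω) (hGnn : ∀ k ω, 0 ≤ G k ω)
    (hrec : ∀ k ≤ n, ∀ᵐ ω ∂μ, X k ω ≤ F k ω + M k ω + ∑ j ∈ Finset.range k, G j ω * X j ω)
    {q : ℝ} (hq : 0 < q) {α α' : ℝ≥0∞} (hconj : 1 / α + 1 / α' = 1)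
    (hqα : ENNReal.ofReal q * α < 1) :
    ∫⁻ ω, ENNReal.ofReal (⨆ k : Fin (n + 1), X k ω ^ q) ∂μ
      ≤ (1 / (1 - ENNReal.ofReal q * α)) ^ (1 / α).toReal
        * eLpNorm (fun ω => ∏ k ∈ Finset.range n, (1 + G k ω) ^ q) α' μ
        * (∫⁻ ω, ENNReal.ofReal (⨆ k : Fin (n + 1), F k ω) ∂μ) ^ q := by
  have : ENNReal.HolderTriple α' α 1 := ⟨by simpa [add_comm] using hconj⟩
  have hα : α ≠ 0 := by rintro rfl; simp at hconj
  have hrecΦ : ∀ k ≤ n, ∀ᵐ ω ∂μ, X k ω ≤ (⨆ i : Fin (n + 1), F i ω) + M k ω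
      + ∑ j ∈ Finset.range k, G j ω * X j ω := fun k hk => by
    filter_upwards [hrec k hk] with ω hω
    refine hω.trans ?_
    gcongr
    exact le_ciSup (f := fun i : Fin (n + 1) => F i ω) (Set.finite_range _).bddAbove
      ⟨k, Nat.lt_succ_of_le hk⟩
  set P : Ω → ℝ := fun ω => growthFactor (G · ω) n ^ q
  set S : Ω → ℝ := fun ω => (⨆ k : Fin (n + 1), X k ω / growthFactor (G · ω) k) ^ q
  have hP : AEStronglyMeasurable P μ :=
    (((measurable_growthFactor hG n.le_succ).mono (ℱ.le n) le_rfl).pow_const q).aestronglyMeasurable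
  have hS : AEStronglyMeasurable S μ :=
    ((measurable_iSup_div_growthFactor hX hG n).pow_const q).aestronglyMeasurable
  have hPprod : (fun ω => ∏ k ∈ Finset.range n, (1 + G k ω) ^ q) = P := by
    funext ω
    exact Real.finsetProd_rpow _ _ (fun j _ => by linarith [hGnn j ω]) q
  calc ∫⁻ ω, ENNReal.ofReal (⨆ k : Fin (n + 1), X k ω ^ q) ∂μ
      ≤ ∫⁻ ω, ‖(P • S) ω‖ₑ ∂μ := lintegral_mono fun ω =>
        (ENNReal.ofReal_le_ofReal
          (iSup_rpow_le_growthFactor_rpow_mul (hXnn · ω) (hGnn · ω) hq.le n)).trans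
          (Real.ofReal_le_enorm _)
    _ = eLpNorm (P • S) 1 μ := eLpNorm_one_eq_lintegral_enorm.symm
    _ ≤ eLpNorm P α' μ * eLpNorm S α μ := eLpNorm_smul_le_mul_eLpNorm hS hP
    _ ≤ eLpNorm P α' μ * ((1 / (1 - ENNReal.ofReal q * α)) ^ (1 / α).toReal
          * (∫⁻ ω, ENNReal.ofReal (⨆ k : Fin (n + 1), F k ω) ∂μ) ^ q) := by
        gcongr
        exact eLpNorm_iSup_div_growthFactor_rpow_le hM hM0 hX hG hXnn hGnn hrecΦ hq hα hqα
    _ = _ := by rw [hPprod, mul_left_comm, mul_assoc]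

end Gronwall

/-- Discrete stochastic Gronwall inequality (Kruse–Scheutzow):
if `X n ≤ F n + M n + ∑_{k<n} G k * X k` with `M` a martingale vanishing at `0`
and `X, F, G` nonnegative adapted sequences, then for `q ∈ (0,1)` and conjugate
exponents `α, α' ∈ [1,∞]` with `q·α < 1`,
`E[sup_{0≤k≤n} X_k^q] ≤ (1 + 1/(1-αq))^{1/α} ‖∏_{k<n}(1+G_k)^q‖_{L^{α'}} (E[sup_{0≤k≤n} F_k])^q`. -/
theorem discrete_stochastic_gronwall
    {Ω : Type*} {m0 : MeasurableSpace Ω} {μ : Measure Ω} [IsProbabilityMeasure μ]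
    (ℱ : Filtration ℕ m0)
    (M X F G : ℕ → Ω → ℝ)
    (hM : Martingale M ℱ μ) (hM0 : ∀ ω, M 0 ω = 0)
    (hXadp : Adapted ℱ X) (hFadp : Adapted ℱ F) (hGadp : Adapted ℱ G)
    (hXnn : ∀ n ω, 0 ≤ X n ω) (hFnn : ∀ n ω, 0 ≤ F n ω) (hGnn : ∀ n ω, 0 ≤ G n ω)
    (hX0 : Integrable (X 0) μ)
    (hrec : ∀ n, ∀ᵐ ω ∂μ,
      X n ω ≤ F n ω + M n ω + ∑ k ∈ Finset.range n, G k ω * X k ω)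
    (q : ℝ) (hq0 : 0 < q) (hq1 : q < 1)
    (α α' : ℝ≥0∞) (hα : 1 ≤ α) (hα' : 1 ≤ α')
    (hconj : 1 / α + 1 / α' = 1)
    (hqα : ENNReal.ofReal q * α < 1)
    (n : ℕ) :
    ∫⁻ ω, ENNReal.ofReal (⨆ k : Fin (n + 1), X k ω ^ q) ∂μ
      ≤ (1 + 1 / (1 - ENNReal.ofReal q * α)) ^ (1 / α).toReal
        * eLpNorm (fun ω => ∏ k ∈ Finset.range n, (1 + G k ω) ^ q) α' μ
        * (∫⁻ ω, ENNReal.ofReal (⨆ k : Fin (n + 1), F k ω) ∂μ) ^ q := by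
  have hrec' : ∀ k ≤ n, ∀ᵐ ω ∂μ,
      X k ω ≤ F k ω + M k ω + ∑ j ∈ Finset.range k, G j ω * X j ω := fun k _ => hrec k
  refine (discrete_stochastic_gronwall_general hM.supermartingale
    (Eventually.of_forall fun ω => (hM0 ω).le) hXadp hGadp hXnn hGnn hrec' hq0 hconj hqα).trans ?_
  gcongr
  exact le_add_self
end

section
/- From polynomial moment rates to pathwise rates: Let (Ω, F, P) be a probability space, let m > 0, γ > 0, C ≥ 0, and let 0 < γ₁ < γ - 1/m (so in particular m(γ - γ₁) > 1). Suppose {Y_M}_{M≥1} is a sequence of nonnegative real random variables satisfying (E[Y_M^m])^{1/m} ≤ C · M^{-γ} for every integer M ≥ 1. Then the random variable K := sup_{M≥1} M^{γ₁} Y_M satisfies E[K^m] < ∞, and for every M ≥ 1 one has Y_M ≤ K · M^{-γ₁} almost surely. -/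
/-!
A supremum of nonnegative numbers is dominated by their sum: with
`S ω = ∑_{M ≥ 1} (M^{γ₁} Y_M ω)^m ∈ [0, ∞]` one has `K^m ≤ S`. By Tonelli and the moment bound,
`E[S] ≤ C^m ∑ M^{-m(γ - γ₁)}`, which converges because `m(γ - γ₁) > 1`. Hence `E[K^m] < ∞`, and
almost surely `S < ∞`, so that the real supremum defining `K` is bounded and dominates each of
its terms.
-/

open MeasureTheory
open scoped ENNReal

theorem le_toReal_tsum_ofReal_rpow_rpow_inv {ι : Type*} {p : ℝ} (hp : 0 < p) {a : ι → ℝ}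
    (h : ∑' i, ENNReal.ofReal (a i ^ p) ≠ ∞) (i : ι) :
    a i ≤ (∑' i, ENNReal.ofReal (a i ^ p)).toReal ^ p⁻¹ := by
  rcases le_total (a i) 0 with hi | hi
  · exact hi.trans (Real.rpow_nonneg ENNReal.toReal_nonneg _)
  · rw [Real.le_rpow_inv_iff_of_pos hi ENNReal.toReal_nonneg hp,
      ← ENNReal.ofReal_le_iff_le_toReal h]
    exact ENNReal.le_tsum i

/-- On an unbounded family the real `⨆` has the junk value `0`; there the right-hand side is `∞`. -/
theorem ofReal_iSup_rpow_le_tsum {ι : Type*} {p : ℝ} (hp : 0 < p) {a : ι → ℝ}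
    (ha : ∀ i, 0 ≤ a i) :
    ENNReal.ofReal ((⨆ i, a i) ^ p) ≤ ∑' i, ENNReal.ofReal (a i ^ p) := by
  by_cases h : ∑' i, ENNReal.ofReal (a i ^ p) = ∞
  · exact h ▸ le_top
  · rw [ENNReal.ofReal_le_iff_le_toReal h,
      ← Real.le_rpow_inv_iff_of_pos (Real.iSup_nonneg ha) ENNReal.toReal_nonneg hp]
    exact Real.iSup_le (le_toReal_tsum_ofReal_rpow_rpow_inv hp h)
      (Real.rpow_nonneg ENNReal.toReal_nonneg _)

section Moments

variable {Ω : Type*} [MeasurableSpace Ω] {μ : Measure Ω} {p : ℝ}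

theorem lintegral_ofReal_iSup_rpow_le_tsum {ι : Type*} [Countable ι] (hp : 0 < p)
    {X : ι → Ω → ℝ} (hX : ∀ i, AEMeasurable (X i) μ) (hX_nonneg : ∀ i, 0 ≤ᵐ[μ] X i) :
    ∫⁻ ω, ENNReal.ofReal ((⨆ i, X i ω) ^ p) ∂μ ≤
      ∑' i, ∫⁻ ω, ENNReal.ofReal (X i ω ^ p) ∂μ := by
  rw [← lintegral_tsum fun i => ((hX i).pow_const p).ennreal_ofReal]
  refine lintegral_mono_ae ?_
  filter_upwards [ae_all_iff.2 hX_nonneg] with ω hω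
  exact ofReal_iSup_rpow_le_tsum hp hω

theorem ae_bddAbove_range_of_tsum_lintegral_rpow_ne_top {ι : Type*} [Countable ι] (hp : 0 < p)
    {X : ι → Ω → ℝ} (hX : ∀ i, AEMeasurable (X i) μ)
    (h : ∑' i, ∫⁻ ω, ENNReal.ofReal (X i ω ^ p) ∂μ ≠ ∞) :
    ∀ᵐ ω ∂μ, BddAbove (Set.range fun i => X i ω) := by
  have hmeas (i : ι) : AEMeasurable (fun ω => ENNReal.ofReal (X i ω ^ p)) μ :=
    ((hX i).pow_const p).ennreal_ofReal
  rw [← lintegral_tsum hmeas] at h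
  filter_upwards [ae_lt_top' (AEMeasurable.tsum hmeas) h] with ω hω
  exact ⟨_, Set.forall_mem_range.2 (le_toReal_tsum_ofReal_rpow_rpow_inv hp hω.ne)⟩

theorem lintegral_ofReal_const_mul_rpow {X : Ω → ℝ} (hX : 0 ≤ᵐ[μ] X) {c : ℝ} (hc : 0 ≤ c) :
    ∫⁻ ω, ENNReal.ofReal ((c * X ω) ^ p) ∂μ =
      ENNReal.ofReal (c ^ p) * ∫⁻ ω, ENNReal.ofReal (X ω ^ p) ∂μ := by
  rw [← lintegral_const_mul' _ _ ENNReal.ofReal_ne_top]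
  refine lintegral_congr_ae ?_
  filter_upwards [hX] with ω hω
  rw [Real.mul_rpow hc hω, ENNReal.ofReal_mul (Real.rpow_nonneg hc p)]

theorem lintegral_ofReal_const_mul_rpow_le (hp : 0 < p) {X : Ω → ℝ} (hX : 0 ≤ᵐ[μ] X)
    {c D : ℝ} (hc : 0 ≤ c) (hD : 0 ≤ D)
    (h : (∫⁻ ω, ENNReal.ofReal (X ω ^ p) ∂μ) ^ (1 / p) ≤ ENNReal.ofReal D) :
    ∫⁻ ω, ENNReal.ofReal ((c * X ω) ^ p) ∂μ ≤ ENNReal.ofReal ((c * D) ^ p) := by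
  have hmoment : ∫⁻ ω, ENNReal.ofReal (X ω ^ p) ∂μ ≤ ENNReal.ofReal (D ^ p) := by
    rwa [one_div, ENNReal.rpow_inv_le_iff hp, ENNReal.ofReal_rpow_of_nonneg hD hp.le] at h
  rw [lintegral_ofReal_const_mul_rpow hX hc, Real.mul_rpow hc hD,
    ENNReal.ofReal_mul (Real.rpow_nonneg hc p)]
  gcongr

end Moments

theorem rpow_mul_mul_rpow_neg_rpow {t C : ℝ} (ht : 0 < t) (hC : 0 ≤ C) (α β p : ℝ) :
    (t ^ α * (C * t ^ (-β))) ^ p = C ^ p * t ^ (p * (α - β)) := by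
  rw [mul_left_comm, ← Real.rpow_add ht, Real.mul_rpow hC (Real.rpow_nonneg ht.le _),
    ← Real.rpow_mul ht.le, ← sub_eq_add_neg, mul_comm p]

theorem summable_rpow_mul_mul_rpow_neg_rpow {α β C p : ℝ} (hp : 0 < p) (hC : 0 ≤ C)
    (h : α < β - 1 / p) :
    Summable fun M : {M : ℕ // 1 ≤ M} => (((M : ℕ) : ℝ) ^ α * (C * ((M : ℕ) : ℝ) ^ (-β))) ^ p := by
  have hexp : p * (α - β) < -1 := by
    have : 1 < p * (β - α) := (div_lt_iff₀' hp).1 (by linarith)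
    linarith
  have hterm (M : {M : ℕ // 1 ≤ M}) := rpow_mul_mul_rpow_neg_rpow
    (Nat.cast_pos.2 M.2 : (0 : ℝ) < (M : ℕ)) hC α β p
  simp only [hterm]
  exact ((Real.summable_nat_rpow.2 hexp).mul_left (C ^ p)).subtype {M : ℕ | 1 ≤ M}

theorem tsum_lintegral_rpow_mul_rpow_lt_top {Ω : Type*} [MeasurableSpace Ω] {μ : Measure Ω}
    {m γ C γ₁ : ℝ} (hm : 0 < m) (hC : 0 ≤ C) (hγ₁ : γ₁ < γ - 1 / m)
    {Y : ℕ → Ω → ℝ} (hY_nonneg : ∀ M, 0 ≤ᵐ[μ] Y M)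
    (hmom : ∀ M : ℕ, 1 ≤ M →
      (∫⁻ ω, ENNReal.ofReal (Y M ω ^ m) ∂μ) ^ (1 / m) ≤ ENNReal.ofReal (C * (M : ℝ) ^ (-γ))) :
    ∑' M : {M : ℕ // 1 ≤ M}, ∫⁻ ω, ENNReal.ofReal ((((M : ℕ) : ℝ) ^ γ₁ * Y M ω) ^ m) ∂μ < ∞ :=
  calc
    _ ≤ ∑' M : {M : ℕ // 1 ≤ M},
          ENNReal.ofReal ((((M : ℕ) : ℝ) ^ γ₁ * (C * ((M : ℕ) : ℝ) ^ (-γ))) ^ m) :=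
      ENNReal.tsum_le_tsum fun M => lintegral_ofReal_const_mul_rpow_le hm (hY_nonneg M)
        (by positivity) (by positivity) (hmom M M.2)
    _ < ∞ := (summable_rpow_mul_mul_rpow_neg_rpow hm hC hγ₁).tsum_ofReal_lt_top

theorem moment_rate_to_pathwise_rate_general {Ω : Type*} [MeasurableSpace Ω] {μ : Measure Ω}
    {m γ C γ₁ : ℝ} (hm : 0 < m) (hC : 0 ≤ C) (hγ₁ : γ₁ < γ - 1 / m)
    {Y : ℕ → Ω → ℝ} (hY : ∀ M, AEMeasurable (Y M) μ) (hY_nonneg : ∀ M, 0 ≤ᵐ[μ] Y M)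
    (hmom : ∀ M : ℕ, 1 ≤ M →
      (∫⁻ ω, ENNReal.ofReal (Y M ω ^ m) ∂μ) ^ (1 / m) ≤ ENNReal.ofReal (C * (M : ℝ) ^ (-γ))) :
    ∫⁻ ω, ENNReal.ofReal
        ((⨆ M : {M : ℕ // 1 ≤ M}, ((M : ℕ) : ℝ) ^ γ₁ * Y M ω) ^ m) ∂μ < ∞ ∧
      ∀ᵐ ω ∂μ, ∀ M : ℕ, 1 ≤ M →
        Y M ω ≤ (⨆ N : {N : ℕ // 1 ≤ N}, ((N : ℕ) : ℝ) ^ γ₁ * Y N ω) * (M : ℝ) ^ (-γ₁) := by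
  have hX (M : {M : ℕ // 1 ≤ M}) : AEMeasurable (fun ω => ((M : ℕ) : ℝ) ^ γ₁ * Y M ω) μ :=
    (hY M).const_mul _
  have hX_nonneg (M : {M : ℕ // 1 ≤ M}) : 0 ≤ᵐ[μ] fun ω => ((M : ℕ) : ℝ) ^ γ₁ * Y M ω :=
    (hY_nonneg M).mono fun _ hω => mul_nonneg (by positivity) hω
  have hsum := tsum_lintegral_rpow_mul_rpow_lt_top hm hC hγ₁ hY_nonneg hmom
  refine ⟨(lintegral_ofReal_iSup_rpow_le_tsum hm hX hX_nonneg).trans_lt hsum, ?_⟩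
  filter_upwards [ae_bddAbove_range_of_tsum_lintegral_rpow_ne_top hm hX hsum.ne] with ω hbdd M hM
  have hM_pos : (0 : ℝ) < M := Nat.cast_pos.2 hM
  rw [Real.rpow_neg hM_pos.le, ← div_eq_mul_inv, le_div_iff₀' (Real.rpow_pos_of_pos hM_pos γ₁)]
  exact le_ciSup hbdd ⟨M, hM⟩

/-- From polynomial moment rates to pathwise rates: if nonnegative random
variables `Y M` satisfy `(E[Y_M^m])^{1/m} ≤ C·M^{-γ}` for all `M ≥ 1`, and
`0 < γ₁ < γ - 1/m`, then `K := sup_{M≥1} M^{γ₁} Y_M` satisfies `E[K^m] < ∞`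
and `Y_M ≤ K·M^{-γ₁}` almost surely for every `M ≥ 1`. -/
theorem moment_rate_to_pathwise_rate
    {Ω : Type*} [MeasurableSpace Ω] (P : Measure Ω) [IsProbabilityMeasure P]
    (m γ C γ₁ : ℝ) (hm : 0 < m) (hγ : 0 < γ) (hC : 0 ≤ C)
    (hγ₁ : 0 < γ₁) (hγ₁' : γ₁ < γ - 1 / m)
    (Y : ℕ → Ω → ℝ) (hYmeas : ∀ M, Measurable (Y M))
    (hYnn : ∀ M ω, 0 ≤ Y M ω)
    (hmom : ∀ M : ℕ, 1 ≤ M →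
      (∫⁻ ω, ENNReal.ofReal (Y M ω ^ m) ∂P) ^ (1 / m)
        ≤ ENNReal.ofReal (C * (M : ℝ) ^ (-γ))) :
    (∫⁻ ω, ENNReal.ofReal
        ((⨆ M : {M : ℕ // 1 ≤ M}, ((M : ℕ) : ℝ) ^ γ₁ * Y M ω) ^ m) ∂P) < ∞ ∧
      ∀ M : ℕ, 1 ≤ M → ∀ᵐ ω ∂P,
        Y M ω ≤ (⨆ N : {N : ℕ // 1 ≤ N}, ((N : ℕ) : ℝ) ^ γ₁ * Y N ω)
          * (M : ℝ) ^ (-γ₁) :=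
  (moment_rate_to_pathwise_rate_general hm hC hγ₁' (fun M => (hYmeas M).aemeasurable)
    (fun M => ae_of_all P (hYnn M)) hmom).imp_right fun h M hM => h.mono fun _ hω => hω M hM
end
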